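/- Let q : ℤ → (ℝ² → ℝ) be C² functions satisfying the two-dimensional Toda lattice q_{xy}(j) = h(j) − h(j−1), where h(j) := exp(q(j+1) − q(j)) and b(j) := q_x(j), and let B¹, B² : ℤ → (ℝ² → ℝ) be C¹ functions satisfying ∂_y B¹(j) = ∂_x h(j) and ∂_y B²(j) = h(j) B¹(j+1) − h(j+1) B¹(j) for all j. Then the density of the first integral I₃ is a telescoping y-derivative: for all j ∈ ℤ, ∂_y( b(j)³ + 3 B¹(j)(b(j) + b(j+1)) + 3 B²(j) ) = G(j) − G(j−1), where G(j) := 3 h(j)( b(j+1)² + B¹(j+1) ). Consequently the formal sum I₃ = Σ_j ( b(j)³ + 3 b^{(1)}(j)(b(j)+b(j+1)) + 3 b^{(2)}(j) ) is a y-integral of the Toda lattice. -/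

import Mathlib

/-- Partial derivative in the first (x) variable. -/
noncomputable def pdx (f : ℝ × ℝ → ℝ) : ℝ × ℝ → ℝ :=
  fun p => deriv (fun t => f (t, p.2)) p.1

/-- Partial derivative in the second (y) variable. -/
noncomputable def pdy (f : ℝ × ℝ → ℝ) : ℝ × ℝ → ℝ :=
  fun p => deriv (fun t => f (p.1, t)) p.2

/-!
As `hⱼ` is an exponential, `∂_x hⱼ = hⱼ (bⱼ₊₁ - bⱼ)`, so the `y`-derivatives of `bⱼ`, `B¹ⱼ`, `B²ⱼ`
are polynomials in `b`, `h` and `B¹`. In the derivative of `bⱼ³ + 3 B¹ⱼ (bⱼ + bⱼ₊₁) + 3 B²ⱼ` the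
terms without `B¹` combine, through `(bⱼ₊₁ - bⱼ) (bⱼ₊₁ + bⱼ) = bⱼ₊₁² - bⱼ²`, to
`3 hⱼ bⱼ₊₁² - 3 hⱼ₋₁ bⱼ²`. The terms with `B¹` are `3 B¹ⱼ (hⱼ₊₁ - hⱼ₋₁)` and
`3 (hⱼ B¹ⱼ₊₁ - hⱼ₊₁ B¹ⱼ)`, and they add up to `3 hⱼ B¹ⱼ₊₁ - 3 hⱼ₋₁ B¹ⱼ`.
-/

section Slices

variable {𝕜 E F G : Type*} [NontriviallyNormedField 𝕜]
  [NormedAddCommGroup E] [NormedSpace 𝕜 E] [NormedAddCommGroup F] [NormedSpace 𝕜 F]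
  [NormedAddCommGroup G] [NormedSpace 𝕜 G] {f : E × F → G} {p : E × F}

theorem differentiableAt_along_fst (hf : DifferentiableAt 𝕜 f p) :
    DifferentiableAt 𝕜 (fun x => f (x, p.2)) p.1 :=
  DifferentiableAt.comp p.1 (g := f) hf (by fun_prop)

theorem differentiableAt_along_snd (hf : DifferentiableAt 𝕜 f p) :
    DifferentiableAt 𝕜 (fun y => f (p.1, y)) p.2 :=
  DifferentiableAt.comp p.2 (g := f) hf (by fun_prop)

end Slices

section PartialDerivatives

theorem pdx_eq_fderiv {f : ℝ × ℝ → ℝ} {p : ℝ × ℝ} (hf : DifferentiableAt ℝ f p) :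
    pdx f p = fderiv ℝ f p (1, 0) :=
  have hline : HasDerivAt (fun t : ℝ => (t, p.2)) (1, 0) p.1 :=
    (hasDerivAt_id p.1).prodMk (hasDerivAt_const p.1 p.2)
  (hf.hasFDerivAt.comp_hasDerivAt (f := fun t => (t, p.2)) p.1 hline).deriv

theorem contDiff_pdx {f : ℝ × ℝ → ℝ} {m n : WithTop ℕ∞} (hf : ContDiff ℝ n f) (hmn : m + 1 ≤ n) :
    ContDiff ℝ m (pdx f) := by
  have hdiff : Differentiable ℝ f := hf.differentiable (by rintro rfl; simp at hmn)
  have hpdx : pdx f = fun p => fderiv ℝ f p (1, 0) := funext fun p => pdx_eq_fderiv (hdiff p)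
  rw [hpdx]
  exact (hf.fderiv_right hmn).clm_apply contDiff_const

theorem pdx_exp_sub {f g : ℝ × ℝ → ℝ} {p : ℝ × ℝ}
    (hf : DifferentiableAt ℝ (fun t => f (t, p.2)) p.1)
    (hg : DifferentiableAt ℝ (fun t => g (t, p.2)) p.1) :
    pdx (fun s => Real.exp (f s - g s)) p = Real.exp (f p - g p) * (pdx f p - pdx g p) :=
  (hf.hasDerivAt.sub hg.hasDerivAt).exp.deriv

end PartialDerivatives

section FirstIntegral

variable {R : Type*} [CommRing R]

/-- The density `bⱼ³ + 3 B¹ⱼ (bⱼ + bⱼ₊₁) + 3 B²ⱼ` of the first integral `I₃` of the Toda lattice, as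
a polynomial in sequences with values in any commutative ring. -/
def todaI3Density (b B1 B2 : ℤ → R) (j : ℤ) : R :=
  b j ^ 3 + 3 * B1 j * (b j + b (j + 1)) + 3 * B2 j

/-- The flux `Gⱼ = 3 hⱼ (bⱼ₊₁² + B¹ⱼ₊₁)` of the first integral `I₃`: the `y`-derivative of the
density at `j` is `Gⱼ - Gⱼ₋₁`. -/
def todaI3Flux (h b B1 : ℤ → R) (j : ℤ) : R :=
  3 * h j * (b (j + 1) ^ 2 + B1 (j + 1))

theorem todaI3Flux_sub_todaI3Flux_pred (h b B1 : ℤ → R) (j : ℤ) :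
    todaI3Flux h b B1 j - todaI3Flux h b B1 (j - 1) =
      3 * b j ^ 2 * (h j - h (j - 1)) +
        (3 * (h j * (b (j + 1) - b j)) * (b j + b (j + 1)) +
          3 * B1 j * ((h j - h (j - 1)) + (h (j + 1) - h j))) +
        3 * (h j * B1 (j + 1) - h (j + 1) * B1 j) := by
  simp only [todaI3Flux, sub_add_cancel]
  ring

theorem hasDerivAt_todaI3Density {𝕜 A : Type*} [NontriviallyNormedField 𝕜] [NormedCommRing A]
    [NormedAlgebra 𝕜 A] {b B1 B2 : ℤ → 𝕜 → A} {h : ℤ → A} {y : 𝕜}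
    (hb : ∀ j, HasDerivAt (b j) (h j - h (j - 1)) y)
    (hB1 : ∀ j, HasDerivAt (B1 j) (h j * (b (j + 1) y - b j y)) y)
    (hB2 : ∀ j, HasDerivAt (B2 j) (h j * B1 (j + 1) y - h (j + 1) * B1 j y) y) (j : ℤ) :
    HasDerivAt (fun t => todaI3Density (b · t) (B1 · t) (B2 · t) j)
      (todaI3Flux h (b · y) (B1 · y) j - todaI3Flux h (b · y) (B1 · y) (j - 1)) y := by
  have hb_succ : HasDerivAt (b (j + 1)) (h (j + 1) - h j) y := by
    simpa only [add_sub_cancel_right] using hb (j + 1)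
  have hcube := (hb j).fun_pow 3
  have hmixed := ((hB1 j).const_mul 3).fun_mul ((hb j).fun_add hb_succ)
  refine ((hcube.fun_add hmixed).fun_add ((hB2 j).const_mul 3)).congr_deriv ?_
  simpa only [Nat.cast_ofNat, Nat.add_one_sub_one] using
    (todaI3Flux_sub_todaI3Flux_pred h (b · y) (B1 · y) j).symm

end FirstIntegral

theorem toda_first_integral_I3_telescopes_general
    {q h b B1 B2 : ℤ → ℝ × ℝ → ℝ} {p : ℝ × ℝ}
    (hh : ∀ j s, h j s = Real.exp (q (j + 1) s - q j s))
    (hb : ∀ j, b j = pdx (q j))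
    (hq : ∀ j, DifferentiableAt ℝ (fun t => q j (t, p.2)) p.1)
    (hby : ∀ j, DifferentiableAt ℝ (fun t => b j (p.1, t)) p.2)
    (hB1 : ∀ j, DifferentiableAt ℝ (fun t => B1 j (p.1, t)) p.2)
    (hB2 : ∀ j, DifferentiableAt ℝ (fun t => B2 j (p.1, t)) p.2)
    (toda : ∀ j, pdy (b j) p = h j p - h (j - 1) p)
    (pdy_B1 : ∀ j, pdy (B1 j) p = pdx (h j) p)
    (pdy_B2 : ∀ j, pdy (B2 j) p = h j p * B1 (j + 1) p - h (j + 1) p * B1 j p) (j : ℤ) :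
    pdy (fun s => todaI3Density (b · s) (B1 · s) (B2 · s) j) p =
      todaI3Flux (h · p) (b · p) (B1 · p) j - todaI3Flux (h · p) (b · p) (B1 · p) (j - 1) := by
  have pdx_h (i : ℤ) : pdx (h i) p = h i p * (b (i + 1) p - b i p) := by
    rw [funext (hh i), hb, hb]
    exact pdx_exp_sub (hq (i + 1)) (hq i)
  exact (hasDerivAt_todaI3Density (fun i => (hby i).hasDerivAt.congr_deriv (toda i))
    (fun i => (hB1 i).hasDerivAt.congr_deriv ((pdy_B1 i).trans (pdx_h i)))
    (fun i => (hB2 i).hasDerivAt.congr_deriv (pdy_B2 i)) j).deriv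

/-- the density of the first integral
`I₃ = Σⱼ (b(j)³ + 3b⁽¹⁾(j)(b(j)+b(j+1)) + 3b⁽²⁾(j))` is a telescoping y-derivative:
`∂_y(b(j)³ + 3B¹(j)(b(j)+b(j+1)) + 3B²(j)) = G(j) − G(j−1)` with
`G(j) = 3h(j)(b(j+1)² + B¹(j+1))`. Hence `I₃` is a y-integral of the Toda lattice. -/
theorem toda_first_integral_I3_telescopes
    (q h b : ℤ → ℝ × ℝ → ℝ)
    (hq : ∀ j, ContDiff ℝ 2 (q j))
    (hh : ∀ j p, h j p = Real.exp (q (j + 1) p - q j p))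
    (hb : ∀ j, b j = pdx (q j))
    (toda : ∀ (j : ℤ) (p : ℝ × ℝ), pdy (pdx (q j)) p = h j p - h (j - 1) p)
    (B1 B2 : ℤ → ℝ × ℝ → ℝ)
    (hB1 : ∀ j, ContDiff ℝ 1 (B1 j))
    (hB2 : ∀ j, ContDiff ℝ 1 (B2 j))
    (e2 : ∀ (j : ℤ) (p : ℝ × ℝ), pdy (B1 j) p = pdx (h j) p)
    (e4 : ∀ (j : ℤ) (p : ℝ × ℝ),
        pdy (B2 j) p = h j p * B1 (j + 1) p - h (j + 1) p * B1 j p)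
    (G : ℤ → ℝ × ℝ → ℝ)
    (hG : ∀ j p, G j p = 3 * h j p * ((b (j + 1) p) ^ 2 + B1 (j + 1) p)) :
    ∀ (j : ℤ) (p : ℝ × ℝ),
      pdy (fun s => (b j s) ^ 3 + 3 * B1 j s * (b j s + b (j + 1) s) + 3 * B2 j s) p
        = G j p - G (j - 1) p := by
  intro j p
  have hby (i : ℤ) : ContDiff ℝ 1 (b i) := hb i ▸ contDiff_pdx (hq i) one_add_one_eq_two.le
  rw [hG, hG]
  exact toda_first_integral_I3_telescopes_general hh hb
    (fun i => differentiableAt_along_fst ((hq i).differentiable two_ne_zero p))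
    (fun i => differentiableAt_along_snd ((hby i).differentiable one_ne_zero p))
    (fun i => differentiableAt_along_snd ((hB1 i).differentiable one_ne_zero p))
    (fun i => differentiableAt_along_snd ((hB2 i).differentiable one_ne_zero p))
    (fun i => hb i ▸ toda i p) (e2 · p) (e4 · p) j
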